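/- Let e ≥ 1 be an integer. In the tensor product R(2,2^e−1) ⊗ R(2,2^e−1) over ZMod 2, one has the explicit identity z_1^{2^{e+1}−1}·z_2^{2^{e+1}−2} = λ_1^{2^e}·λ_2^{2^e−2}·ρ_1^{2^e}·ρ_2^{2^e−1} + λ_1^{2^e}·λ_2^{2^e−1}·ρ_1^{2^e}·ρ_2^{2^e−2}, and consequently (z_1·z_2)^{2^{e+1}−1} = 0 in R(2,2^e−1) ⊗ R(2,2^e−1). -/

import Mathlib

/-!
Put `q = 2 ^ e` and `m = q - 1`. The defining relations `h_q(x₁, x₂) = 0` and `x₁ ^ (q + 1) = 0` of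
`R(2, m)` imply `x₂ ^ (q + 1) = 0`, `x₁ ^ q * x₂ ^ q = 0` and `x₁ ^ m * x₂ ^ q = -x₁ ^ q * x₂ ^ m`:
multiply the first one by `x₁ - x₂`, `x₁ ^ q` and `x₁ ^ m`.

By the Frobenius identity `(x + y) ^ q = x ^ q + y ^ q` and the vanishing of `(q + 1)`-st powers,
`z_i ^ (q + j) = λ_i ^ q * ρ_i ^ j + ρ_i ^ q * λ_i ^ j`. In the expansion of
`z₁ ^ (q + m) * z₂ ^ (q + j)`, the two terms containing `λ₁ ^ q * λ₂ ^ q` or `ρ₁ ^ q * ρ₂ ^ q`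
vanish, and the last relation turns the other two into
`λ₁ ^ q * ρ₁ ^ q * (λ₂ ^ m * ρ₂ ^ j + λ₂ ^ j * ρ₂ ^ m)`. The identity is the case `j = m - 1`; for
`j = m` the two summands coincide and cancel.
-/

open scoped TensorProduct

/-- Complete homogeneous symmetric polynomial of degree `d` in a list of elements
of a commutative (semi)ring: `h_d(l)`. -/
noncomputable def completeHomog {R : Type*} [CommSemiring R] : List R → ℕ → R
  | [], 0 => 1
  | [], _ + 1 => 0
  | x :: l, d => ∑ t ∈ Finset.range (d + 1), x ^ t * completeHomog l (d - t)

/-- Elementary symmetric polynomial of degree `d` in a list of elements: `e_d(l)`. -/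
noncomputable def elemSymm {R : Type*} [CommSemiring R] : List R → ℕ → R
  | _, 0 => 1
  | [], _ + 1 => 0
  | x :: l, d + 1 => elemSymm l (d + 1) + x * elemSymm l d

/-- The ideal of `(ZMod 2)[x_1, …, x_k]` generated by the complete homogeneous
symmetric polynomials `h_{m+i}(x_1, …, x_{k+1-i})` for `1 ≤ i ≤ k`. -/
noncomputable def flagIdeal (k m : ℕ) : Ideal (MvPolynomial (Fin k) (ZMod 2)) :=
  Ideal.span { p | ∃ i : ℕ, 1 ≤ i ∧ i ≤ k ∧
    p = completeHomog (((List.finRange k).take (k + 1 - i)).map MvPolynomial.X) (m + i) }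

/-- `R(k,m)`, the quotient of `(ZMod 2)[x_1, …, x_k]` by `flagIdeal k m`;
this is the mod-2 cohomology ring of the real flag manifold `F(1^k, m)`. -/
abbrev FlagRing (k m : ℕ) : Type :=
  MvPolynomial (Fin k) (ZMod 2) ⧸ flagIdeal k m

/-- The image of the variable `x_{j+1}` in `R(k,m)` (`j` is 0-indexed). -/
noncomputable def xGen (k m : ℕ) (j : Fin k) : FlagRing k m :=
  Ideal.Quotient.mk (flagIdeal k m) (MvPolynomial.X j)

/-- The zero-divisor `z_{j+1} = x_{j+1} ⊗ 1 + 1 ⊗ x_{j+1}` in `R(k,m) ⊗ R(k,m)`. -/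
noncomputable def zGen (k m : ℕ) (j : Fin k) :
    FlagRing k m ⊗[ZMod 2] FlagRing k m :=
  xGen k m j ⊗ₜ 1 + 1 ⊗ₜ xGen k m j

/-- `x_{i+1,j+1}` in the `s`-fold tensor power `R(k,m)^{⊗ s}`: the element having
`x_{j+1}` in the `(i+1)`-st tensor factor and `1` elsewhere (`i`, `j` 0-indexed). -/
noncomputable def xT (k m s : ℕ) (i : Fin s) (j : Fin k) :
    ⨂[ZMod 2] _ : Fin s, FlagRing k m :=
  PiTensorProduct.tprod (ZMod 2) (fun t => if t = i then xGen k m j else 1)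

/-- The `s`-th zero-divisor `z_{i+1,j+1} = x_{1,j+1} + x_{i+1,j+1}` in `R(k,m)^{⊗ s}`. -/
noncomputable def zT (k m s : ℕ) (hs : 0 < s) (i : Fin s) (j : Fin k) :
    ⨂[ZMod 2] _ : Fin s, FlagRing k m :=
  xT k m s ⟨0, hs⟩ j + xT k m s i j

section CompleteHomog

variable {R S : Type*} [CommSemiring R] [CommSemiring S]

theorem map_completeHomog (f : R →+* S) (l : List R) (d : ℕ) :
    f (completeHomog l d) = completeHomog (l.map f) d := by
  induction l generalizing d with
  | nil => cases d <;> simp [completeHomog]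
  | cons x l ih => simp only [List.map_cons, completeHomog, map_sum, map_mul, map_pow, ih]

theorem completeHomog_nil_of_ne_zero {d : ℕ} (hd : d ≠ 0) : completeHomog ([] : List R) d = 0 := by
  obtain ⟨d, rfl⟩ := Nat.exists_eq_succ_of_ne_zero hd
  rw [completeHomog]

theorem completeHomog_singleton (x : R) (d : ℕ) : completeHomog [x] d = x ^ d := by
  have hlower : ∀ t ∈ Finset.range d, x ^ t * completeHomog [] (d - t) = 0 := fun t ht => by
    rw [completeHomog_nil_of_ne_zero (Nat.sub_ne_zero_of_lt (Finset.mem_range.1 ht)), mul_zero]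
  rw [completeHomog, Finset.sum_range_succ, Finset.sum_eq_zero hlower, Nat.sub_self, completeHomog,
    mul_one, zero_add]

theorem completeHomog_pair (x y : R) (d : ℕ) :
    completeHomog [x, y] d = ∑ t ∈ Finset.range (d + 1), x ^ t * y ^ (d - t) := by
  rw [completeHomog]
  simp only [completeHomog_singleton]

theorem completeHomog_pair_mul_sub {A : Type*} [CommRing A] (x y : A) (d : ℕ) :
    completeHomog [x, y] d * (x - y) = x ^ (d + 1) - y ^ (d + 1) := by
  rw [completeHomog_pair]
  exact (Commute.all x y).geom_sum₂_mul (d + 1)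

theorem pow_mul_completeHomog_pair_of_pow_add_eq_zero {x : R} {i j d : ℕ}
    (hx : x ^ (i + j) = 0) (hj : j ≤ d + 1) (y : R) :
    x ^ i * completeHomog [x, y] d = ∑ t ∈ Finset.range j, x ^ (i + t) * y ^ (d - t) := by
  simp only [completeHomog_pair, Finset.mul_sum, ← mul_assoc, ← pow_add]
  refine (Finset.sum_subset (Finset.range_subset_range.2 hj) fun t _ ht => ?_).symm
  have hjt : j ≤ t := by simpa using ht
  rw [pow_eq_zero_of_le (Nat.add_le_add_left hjt i) hx, zero_mul]

end CompleteHomog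

section Frobenius

theorem mul_add_pow_of_mul_eq_zero {S : Type*} [CommSemiring S] {w x : S} (h : w * x = 0) (y : S)
    (j : ℕ) : w * (x + y) ^ j = w * y ^ j := by
  induction j with
  | zero => simp only [pow_zero]
  | succ j ih =>
    calc w * (x + y) ^ (j + 1) = w * (x + y) ^ j * (x + y) := by ring
      _ = w * x * y ^ j + w * y ^ (j + 1) := by rw [ih]; ring
      _ = w * y ^ (j + 1) := by rw [h, zero_mul, zero_add]

variable {S : Type*} [CommSemiring S] {p : ℕ}

/- Assuming `(p : S) = 0` instead of `CharP S p` includes the zero ring, so that a tensor product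
need not be shown to be nontrivial. -/
theorem add_pow_prime_pow (hp : p.Prime) (hpS : (p : S) = 0) (x y : S) (e : ℕ) :
    (x + y) ^ p ^ e = x ^ p ^ e + y ^ p ^ e := by
  obtain ⟨r, hr⟩ := exists_add_pow_prime_pow_eq hp x y e
  simpa [hpS] using hr

theorem add_pow_prime_pow_add (hp : p.Prime) (hpS : (p : S) = 0) {x y : S} {e : ℕ}
    (hx : x ^ (p ^ e + 1) = 0) (hy : y ^ (p ^ e + 1) = 0) (j : ℕ) :
    (x + y) ^ (p ^ e + j) = x ^ p ^ e * y ^ j + y ^ p ^ e * x ^ j := by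
  rw [pow_succ] at hx hy
  rw [pow_add, add_pow_prime_pow hp hpS, add_mul, mul_add_pow_of_mul_eq_zero hx, add_comm x y,
    mul_add_pow_of_mul_eq_zero hy]

end Frobenius

/-- The pair `(a, b)` satisfies the defining relations of the generators `x₁`, `x₂` of `R(2, m)`.
Allowing elements of any commutative semiring lets the relations be used in both factors of a
tensor product. -/
structure IsFlagPair {S : Type*} [CommSemiring S] (m : ℕ) (a b : S) : Prop where
  completeHomog_pair_eq_zero : completeHomog [a, b] (m + 1) = 0
  completeHomog_left_eq_zero : completeHomog [a] (m + 2) = 0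

namespace IsFlagPair

section CommSemiring

variable {S T : Type*} [CommSemiring S] [CommSemiring T] {m : ℕ} {a b : S}

theorem map (h : IsFlagPair m a b) (f : S →+* T) : IsFlagPair m (f a) (f b) where
  completeHomog_pair_eq_zero := by
    simpa only [map_completeHomog, List.map_cons, List.map_nil, map_zero] using
      congrArg f h.completeHomog_pair_eq_zero
  completeHomog_left_eq_zero := by
    simpa only [map_completeHomog, List.map_cons, List.map_nil, map_zero] using
      congrArg f h.completeHomog_left_eq_zero

theorem pow_left_eq_zero (h : IsFlagPair m a b) : a ^ (m + 2) = 0 := by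
  rw [← completeHomog_singleton, h.completeHomog_left_eq_zero]

theorem pow_mul_pow_eq_zero (h : IsFlagPair m a b) : a ^ (m + 1) * b ^ (m + 1) = 0 := by
  have htrunc := pow_mul_completeHomog_pair_of_pow_add_eq_zero (i := m + 1) (j := 1) (d := m + 1)
    h.pow_left_eq_zero (by lia) b
  simpa [h.completeHomog_pair_eq_zero] using htrunc.symm

end CommSemiring

section CommRing

variable {S : Type*} [CommRing S] {m : ℕ} {a b c d : S}

theorem pow_right_eq_zero (h : IsFlagPair m a b) : b ^ (m + 2) = 0 := by
  simpa [h.completeHomog_pair_eq_zero, h.pow_left_eq_zero] using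
    completeHomog_pair_mul_sub a b (m + 1)

theorem pow_mul_pow_succ (h : IsFlagPair m a b) :
    a ^ m * b ^ (m + 1) = -(a ^ (m + 1) * b ^ m) := by
  have htrunc := pow_mul_completeHomog_pair_of_pow_add_eq_zero (i := m) (j := 2) (d := m + 1)
    h.pow_left_eq_zero (by lia) b
  rw [eq_neg_iff_add_eq_zero]
  simpa [h.completeHomog_pair_eq_zero, Finset.sum_range_succ] using htrunc.symm

theorem add_pow_mul_add_pow {p e : ℕ} (hab : IsFlagPair m a b) (hcd : IsFlagPair m c d)
    (hp : p.Prime) (hpS : (p : S) = 0) (hm : p ^ e = m + 1) (j : ℕ) :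
    (a + c) ^ (p ^ e + m) * (b + d) ^ (p ^ e + j) =
      -(a ^ p ^ e * c ^ p ^ e * (b ^ m * d ^ j + b ^ j * d ^ m)) := by
  have hac : (a + c) ^ (p ^ e + m) = a ^ p ^ e * c ^ m + c ^ p ^ e * a ^ m :=
    add_pow_prime_pow_add hp hpS (hm ▸ hab.pow_left_eq_zero) (hm ▸ hcd.pow_left_eq_zero) m
  have hbd : (b + d) ^ (p ^ e + j) = b ^ p ^ e * d ^ j + d ^ p ^ e * b ^ j :=
    add_pow_prime_pow_add hp hpS (hm ▸ hab.pow_right_eq_zero) (hm ▸ hcd.pow_right_eq_zero) j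
  rw [hac, hbd, hm]
  linear_combination (c ^ m * d ^ j) * hab.pow_mul_pow_eq_zero +
    (c ^ (m + 1) * d ^ j) * hab.pow_mul_pow_succ + (a ^ m * b ^ j) * hcd.pow_mul_pow_eq_zero +
    (a ^ (m + 1) * b ^ j) * hcd.pow_mul_pow_succ

end CommRing

section TensorProduct

variable {A B : Type*} [CommRing A] [CommRing B] [Algebra (ZMod 2) A] [Algebra (ZMod 2) B]
  {e m : ℕ} {a b : A} {c d : B}

theorem tmul_add_pow_mul_tmul_add_pow (hab : IsFlagPair m a b) (hcd : IsFlagPair m c d)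
    (hm : 2 ^ e = m + 1) (j : ℕ) :
    (a ⊗ₜ[ZMod 2] (1 : B) + (1 : A) ⊗ₜ[ZMod 2] c) ^ (2 ^ e + m) *
        (b ⊗ₜ[ZMod 2] (1 : B) + (1 : A) ⊗ₜ[ZMod 2] d) ^ (2 ^ e + j) =
      (a ⊗ₜ[ZMod 2] (1 : B)) ^ 2 ^ e * ((1 : A) ⊗ₜ[ZMod 2] c) ^ 2 ^ e *
        ((b ⊗ₜ[ZMod 2] (1 : B)) ^ m * ((1 : A) ⊗ₜ[ZMod 2] d) ^ j +
          (b ⊗ₜ[ZMod 2] (1 : B)) ^ j * ((1 : A) ⊗ₜ[ZMod 2] d) ^ m) := by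
  have hleft := hab.map (Algebra.TensorProduct.includeLeftRingHom : A →+* A ⊗[ZMod 2] B)
  have hright := hcd.map (Algebra.TensorProduct.includeRight : B →ₐ[ZMod 2] A ⊗[ZMod 2] B).toRingHom
  have htwo : ((2 : ℕ) : A ⊗[ZMod 2] B) = 0 := by
    simpa using ZModModule.char_nsmul_eq_zero 2 (1 : A ⊗[ZMod 2] B)
  exact (hleft.add_pow_mul_add_pow hright Nat.prime_two htwo hm j).trans
    (ZModModule.neg_eq_self _)

theorem tmul_add_mul_tmul_add_pow_eq_zero (hab : IsFlagPair m a b) (hcd : IsFlagPair m c d)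
    (hm : 2 ^ e = m + 1) :
    ((a ⊗ₜ[ZMod 2] (1 : B) + (1 : A) ⊗ₜ[ZMod 2] c) *
        (b ⊗ₜ[ZMod 2] (1 : B) + (1 : A) ⊗ₜ[ZMod 2] d)) ^ (2 ^ e + m) = 0 := by
  rw [mul_pow, hab.tmul_add_pow_mul_tmul_add_pow hcd hm, ZModModule.add_self, mul_zero]

end TensorProduct

end IsFlagPair

theorem completeHomog_xGen_eq_zero {k i : ℕ} (m : ℕ) (hi : 1 ≤ i) (hik : i ≤ k) :
    completeHomog (((List.finRange k).take (k + 1 - i)).map (xGen k m)) (m + i) = 0 := by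
  have hgen : Ideal.Quotient.mk (flagIdeal k m)
      (completeHomog (((List.finRange k).take (k + 1 - i)).map MvPolynomial.X) (m + i)) = 0 :=
    Ideal.Quotient.eq_zero_iff_mem.2 (Ideal.subset_span ⟨i, hi, hik, rfl⟩)
  rwa [map_completeHomog, List.map_map] at hgen

theorem isFlagPair_xGen (m : ℕ) : IsFlagPair m (xGen 2 m 0) (xGen 2 m 1) where
  completeHomog_pair_eq_zero := completeHomog_xGen_eq_zero m le_rfl one_le_two
  completeHomog_left_eq_zero := completeHomog_xGen_eq_zero m one_le_two le_rfl

/-- for `e ≥ 1`, in `R(2, 2^e-1) ⊗ R(2, 2^e-1)` one has the identity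
`z_1^{2^{e+1}-1} z_2^{2^{e+1}-2}
  = λ_1^{2^e} λ_2^{2^e-2} ρ_1^{2^e} ρ_2^{2^e-1} + λ_1^{2^e} λ_2^{2^e-1} ρ_1^{2^e} ρ_2^{2^e-2}`
(where `λ_i = x_i ⊗ 1`, `ρ_i = 1 ⊗ x_i`), and consequently `(z_1 z_2)^{2^{e+1}-1} = 0`. -/
theorem statement9 (e : ℕ) (he : 1 ≤ e) :
    (zGen 2 (2 ^ e - 1) 0 ^ (2 ^ (e + 1) - 1) * zGen 2 (2 ^ e - 1) 1 ^ (2 ^ (e + 1) - 2) =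
      (xGen 2 (2 ^ e - 1) 0 ⊗ₜ[ZMod 2] (1 : FlagRing 2 (2 ^ e - 1))) ^ (2 ^ e) *
        (xGen 2 (2 ^ e - 1) 1 ⊗ₜ[ZMod 2] (1 : FlagRing 2 (2 ^ e - 1))) ^ (2 ^ e - 2) *
        ((1 : FlagRing 2 (2 ^ e - 1)) ⊗ₜ[ZMod 2] xGen 2 (2 ^ e - 1) 0) ^ (2 ^ e) *
        ((1 : FlagRing 2 (2 ^ e - 1)) ⊗ₜ[ZMod 2] xGen 2 (2 ^ e - 1) 1) ^ (2 ^ e - 1) +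
      (xGen 2 (2 ^ e - 1) 0 ⊗ₜ[ZMod 2] (1 : FlagRing 2 (2 ^ e - 1))) ^ (2 ^ e) *
        (xGen 2 (2 ^ e - 1) 1 ⊗ₜ[ZMod 2] (1 : FlagRing 2 (2 ^ e - 1))) ^ (2 ^ e - 1) *
        ((1 : FlagRing 2 (2 ^ e - 1)) ⊗ₜ[ZMod 2] xGen 2 (2 ^ e - 1) 0) ^ (2 ^ e) *
        ((1 : FlagRing 2 (2 ^ e - 1)) ⊗ₜ[ZMod 2] xGen 2 (2 ^ e - 1) 1) ^ (2 ^ e - 2)) ∧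
    (zGen 2 (2 ^ e - 1) 0 * zGen 2 (2 ^ e - 1) 1) ^ (2 ^ (e + 1) - 1) = 0 := by
  have hq : 2 ^ e = 2 ^ e - 1 + 1 := (Nat.sub_add_cancel Nat.one_le_two_pow).symm
  have hq_two : 2 ≤ 2 ^ e := Nat.le_self_pow (Nat.one_le_iff_ne_zero.1 he) 2
  have hodd : 2 ^ (e + 1) - 1 = 2 ^ e + (2 ^ e - 1) := by lia
  have heven : 2 ^ (e + 1) - 2 = 2 ^ e + (2 ^ e - 2) := by lia
  have hx := isFlagPair_xGen (2 ^ e - 1)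
  rw [hodd, heven]
  refine ⟨(hx.tmul_add_pow_mul_tmul_add_pow hx hq (2 ^ e - 2)).trans ?_,
    hx.tmul_add_mul_tmul_add_pow_eq_zero hx hq⟩
  ring
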